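/- Let a > 0, b ≥ 0, x ≥ 0, y ≥ 0 be real numbers and let α ∈ (0, 1/3). If |x − a| ≤ α·a and |(x + y) − (a + b)| ≤ α·(a + b), then x + y > 0 and |x/(x+y) − a/(a+b)| ≤ 3α. -/

import Mathlib

/-- Let `a > 0`, `b ≥ 0`, `x ≥ 0`, `y ≥ 0` be reals and `α ∈ (0, 1/3)`.
If `|x − a| ≤ α a` and `|(x + y) − (a + b)| ≤ α (a + b)`, then `x + y > 0` and
`|x/(x+y) − a/(a+b)| ≤ 3 α`. -/
theorem abs_ratio_sub_ratio_le_of_rel_close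
    (a b x y α : ℝ) (ha : 0 < a) (hb : 0 ≤ b) (hx : 0 ≤ x) (hy : 0 ≤ y)
    (hα : α ∈ Set.Ioo (0:ℝ) (1/3))
    (h1 : |x - a| ≤ α * a) (h2 : |(x + y) - (a + b)| ≤ α * (a + b)) :
    0 < x + y ∧ |x / (x + y) - a / (a + b)| ≤ 3 * α := by
  obtain ⟨h0, h3⟩ := hα
  obtain ⟨h1a, h1b⟩ := abs_le.mp h1
  obtain ⟨h2a, h2b⟩ := abs_le.mp h2
  have hS : 0 < a + b := by linarith
  have hT3 : 2 * (a + b) ≤ 3 * (x + y) := by nlinarith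
  have hT : 0 < x + y := by linarith
  refine ⟨hT, ?_⟩
  have e : x / (x + y) - a / (a + b)
      = ((x - a) * (a + b) - a * ((x + y) - (a + b))) / ((x + y) * (a + b)) := by
    field_simp
    ring
  have p1 := mul_le_mul_of_nonneg_right h1a hS.le
  have p2 := mul_le_mul_of_nonneg_right h1b hS.le
  have p3 := mul_le_mul_of_nonneg_left h2a ha.le
  have p4 := mul_le_mul_of_nonneg_left h2b ha.le
  have p5 : 0 ≤ α * (a + b) * (3 * (x + y) - 2 * a) :=
    mul_nonneg (mul_nonneg h0.le hS.le) (by linarith)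
  rw [e, abs_div, abs_of_pos (mul_pos hT hS), div_le_iff₀ (mul_pos hT hS), abs_le]
  constructor <;> linarith
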